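/- arXiv:1301.2361 — 8 statements merged into one kernel-verified Lean document; each statement's English description precedes it below -/
import Mathlib

section
/- For every integer m ≥ 0, the polynomials f_m and g_m have the closed formulas f_m(s) = Σ_{i=0}^{m} C(m+i, m-i) s^i and g_m(s) = Σ_{i=0}^{m} C(m+1+i, m-i) s^i, where C(a,b) denotes the binomial coefficient. In particular, for m ≥ 0 all coefficients of f_m and g_m are positive integers, f_m and g_m have degree m, and both are monic. -/
open Polynomial Finset

/-- The polynomial `f_m ∈ ℤ[s]` for `m ≥ 0`: `f_0 = 1`, `f_1 = s+1`,
`f_{m+2} = (s+2) f_{m+1} - f_m`. -/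
noncomputable def fP : ℕ → Polynomial ℤ
  | 0 => 1
  | 1 => X + 1
  | n + 2 => (X + 2) * fP (n + 1) - fP n

/-- The polynomial `g_m ∈ ℤ[s]` for `m ≥ 0`: `g_0 = 1`, `g_1 = s+2`,
`g_{m+2} = (s+2) g_{m+1} - g_m`. -/
noncomputable def gP : ℕ → Polynomial ℤ
  | 0 => 1
  | 1 => X + 2
  | n + 2 => (X + 2) * gP (n + 1) - gP n

/-!
The sequence `f_0, g_0, f_1, g_1, …` satisfies the interlaced first-order recursions
`f_{m+1} = s g_m + f_m` and `g_{m+1} = f_{m+1} + g_m`. On coefficients these are Pascal's rule, so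
the coefficients of `s^i` in `f_m` and `g_m` are `C(m+i, 2i)` and `C(m+1+i, 2i+1)`. These binomial
coefficients vanish exactly for `i > m`, and they equal `1` for `i = m`.
-/

theorem fP_add_two (m : ℕ) : fP (m + 2) = (X + 2) * fP (m + 1) - fP m := by
  rw [fP]

theorem gP_add_two (m : ℕ) : gP (m + 2) = (X + 2) * gP (m + 1) - gP m := by
  rw [gP]

theorem fP_succ : ∀ m, fP (m + 1) = X * gP m + fP m
  | 0 => by simp only [fP, gP, mul_one]
  | 1 => by simp only [fP, gP]; ring
  | m + 2 => by
    linear_combination fP_add_two (m + 1) - X * gP_add_two m - fP_add_two m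
      + (X + 2) * fP_succ (m + 1) - fP_succ m

theorem gP_succ : ∀ m, gP (m + 1) = fP (m + 1) + gP m
  | 0 => by simp only [fP, gP]; ring
  | 1 => by simp only [fP, gP]; ring
  | m + 2 => by
    linear_combination gP_add_two (m + 1) - fP_add_two (m + 1) - gP_add_two m
      + (X + 2) * gP_succ (m + 1) - gP_succ m

theorem coeff_fP_and_coeff_gP (m i : ℕ) :
    (fP m).coeff i = (m + i).choose (2 * i) ∧
      (gP m).coeff i = (m + 1 + i).choose (2 * i + 1) := by
  induction m generalizing i with
  | zero =>
    cases i with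
    | zero => simp [fP, gP]
    | succ i =>
      rw [Nat.choose_eq_zero_of_lt (by lia), Nat.choose_eq_zero_of_lt (by lia)]
      simp [fP, gP, coeff_one]
  | succ m ih =>
    have coeff_fP_succ : (fP (m + 1)).coeff i = (m + 1 + i).choose (2 * i) := by
      rw [fP_succ, coeff_add, (ih i).1]
      cases i with
      | zero => simp
      | succ i =>
        have pascal := Nat.choose_succ_succ (m + 1 + i) (2 * i + 1)
        rw [coeff_X_mul, (ih i).2, add_left_comm m i 1, add_comm i]
        exact_mod_cast pascal.symm
    have coeff_gP_succ : (gP (m + 1)).coeff i = (m + 1 + 1 + i).choose (2 * i + 1) := by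
      rw [gP_succ, coeff_add, coeff_fP_succ, (ih i).2, add_right_comm (m + 1) 1 i]
      exact_mod_cast (Nat.choose_succ_succ (m + 1 + i) (2 * i)).symm
    exact ⟨coeff_fP_succ, coeff_gP_succ⟩

theorem coeff_fP (m i : ℕ) : (fP m).coeff i = (m + i).choose (2 * i) :=
  (coeff_fP_and_coeff_gP m i).1

theorem coeff_gP (m i : ℕ) : (gP m).coeff i = (m + 1 + i).choose (2 * i + 1) :=
  (coeff_fP_and_coeff_gP m i).2

theorem coeff_fP_self (m : ℕ) : (fP m).coeff m = 1 := by
  rw [coeff_fP, ← two_mul, Nat.choose_self, Nat.cast_one]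

theorem coeff_gP_self (m : ℕ) : (gP m).coeff m = 1 := by
  rw [coeff_gP, add_right_comm, ← two_mul, Nat.choose_self, Nat.cast_one]

theorem coeff_fP_pos_iff {m i : ℕ} : 0 < (fP m).coeff i ↔ i ≤ m := by
  rw [coeff_fP, Nat.cast_pos, Nat.pos_iff_ne_zero, Nat.choose_ne_zero_iff]
  lia

theorem coeff_gP_pos_iff {m i : ℕ} : 0 < (gP m).coeff i ↔ i ≤ m := by
  rw [coeff_gP, Nat.cast_pos, Nat.pos_iff_ne_zero, Nat.choose_ne_zero_iff]
  lia

theorem natDegree_fP_le (m : ℕ) : (fP m).natDegree ≤ m :=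
  natDegree_le_iff_coeff_eq_zero.2 fun i hi => by
    rw [coeff_fP, Nat.choose_eq_zero_of_lt (by lia), Nat.cast_zero]

theorem natDegree_gP_le (m : ℕ) : (gP m).natDegree ≤ m :=
  natDegree_le_iff_coeff_eq_zero.2 fun i hi => by
    rw [coeff_gP, Nat.choose_eq_zero_of_lt (by lia), Nat.cast_zero]

theorem degree_fP (m : ℕ) : (fP m).degree = m :=
  degree_eq_of_le_of_coeff_ne_zero (degree_le_of_natDegree_le (natDegree_fP_le m))
    (coeff_fP_pos_iff.2 le_rfl).ne'

theorem degree_gP (m : ℕ) : (gP m).degree = m :=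
  degree_eq_of_le_of_coeff_ne_zero (degree_le_of_natDegree_le (natDegree_gP_le m))
    (coeff_gP_pos_iff.2 le_rfl).ne'

theorem monic_fP (m : ℕ) : (fP m).Monic :=
  monic_of_natDegree_le_of_coeff_eq_one m (natDegree_fP_le m) (coeff_fP_self m)

theorem monic_gP (m : ℕ) : (gP m).Monic :=
  monic_of_natDegree_le_of_coeff_eq_one m (natDegree_gP_le m) (coeff_gP_self m)

theorem fP_eq_sum_range (m : ℕ) :
    fP m = ∑ i ∈ range (m + 1), C ((m + i).choose (m - i) : ℤ) * X ^ i := by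
  rw [as_sum_range_C_mul_X_pow' (fP m) (Nat.lt_succ_of_le (natDegree_fP_le m))]
  refine sum_congr rfl fun i hi => ?_
  have hi : i ≤ m := mem_range_succ_iff.1 hi
  rw [coeff_fP, Nat.choose_symm_of_eq_add (show m + i = 2 * i + (m - i) by lia)]

theorem gP_eq_sum_range (m : ℕ) :
    gP m = ∑ i ∈ range (m + 1), C ((m + 1 + i).choose (m - i) : ℤ) * X ^ i := by
  rw [as_sum_range_C_mul_X_pow' (gP m) (Nat.lt_succ_of_le (natDegree_gP_le m))]
  refine sum_congr rfl fun i hi => ?_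
  have hi : i ≤ m := mem_range_succ_iff.1 hi
  rw [coeff_gP, Nat.choose_symm_of_eq_add (show m + 1 + i = 2 * i + 1 + (m - i) by lia)]

/-- Closed formulas for `f_m` and `g_m` (`m ≥ 0`): all coefficients are positive,
both have degree `m`, and both are monic. -/
theorem fg_closed_formula (m : ℕ) :
    fP m = ∑ i ∈ range (m + 1), C ((m + i).choose (m - i) : ℤ) * X ^ i ∧
    gP m = ∑ i ∈ range (m + 1), C ((m + 1 + i).choose (m - i) : ℤ) * X ^ i ∧
    (∀ i ≤ m, 0 < (fP m).coeff i) ∧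
    (∀ i ≤ m, 0 < (gP m).coeff i) ∧
    (fP m).degree = m ∧ (gP m).degree = m ∧
    (fP m).Monic ∧ (gP m).Monic :=
  ⟨fP_eq_sum_range m, gP_eq_sum_range m, fun _ => coeff_fP_pos_iff.2, fun _ => coeff_gP_pos_iff.2,
    degree_fP m, degree_gP m, monic_fP m, monic_gP m⟩
end

section
/- For every integer m, the identity f_m² = s·g_m·g_{m-1} + 1 holds (as an identity of polynomials in s). -/
/-- `fN m` is the polynomial `f_m` (for `m ≥ 0`), viewed as a function of a real variable. -/
noncomputable def fN : ℕ → ℝ → ℝ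
  | 0 => fun _ => 1
  | 1 => fun s => s + 1
  | n + 2 => fun s => (s + 2) * fN (n + 1) s - fN n s

/-- `gN m` is the polynomial `g_m` (for `m ≥ 0`), viewed as a function of a real variable. -/
noncomputable def gN : ℕ → ℝ → ℝ
  | 0 => fun _ => 1
  | 1 => fun s => s + 2
  | n + 2 => fun s => (s + 2) * gN (n + 1) s - gN n s

/-- The two-sided family `f_m`, `m ∈ ℤ`, with `f_{-m} = f_{m-1}` for `m ≥ 1`. -/
noncomputable def fZ : ℤ → ℝ → ℝ
  | Int.ofNat n => fN n
  | Int.negSucc n => fN n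

/-- The two-sided family `g_m`, `m ∈ ℤ`, with `g_{-1} = 0` and `g_{-m} = -g_{m-2}` for `m ≥ 2`. -/
noncomputable def gZ : ℤ → ℝ → ℝ
  | Int.ofNat n => gN n
  | Int.negSucc 0 => fun _ => 0
  | Int.negSucc (n + 1) => fun s => -(gN n s)

/-!
The recursion `u (m + 2) = (s + 2) * u (m + 1) - u m` is that of the rescaled Chebyshev polynomials
of the second kind `S` at the point `s + 2`. So `g_m = S_m(s + 2)` and `f_m = g_m - g_{m - 1}`, and
the identity becomes the norm relation `S_{m-1}² - X * S_{m-1} * S_m + S_m² = 1`.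
-/

section Chebyshev

open Polynomial Polynomial.Chebyshev

theorem chebyshevS_sub_sq (R : Type*) [CommRing R] (m : ℤ) :
    (S R m - S R (m - 1)) ^ 2 = (X - 2) * S R m * S R (m - 1) + 1 := by
  have norm_eq_one := S_sq_add_S_sq R (m - 1)
  rw [sub_add_cancel] at norm_eq_one
  linear_combination norm_eq_one

theorem chebyshevS_neg_sub_one_sub (R : Type*) [CommRing R] (m : ℤ) :
    S R (-m - 1) - S R (-m - 1 - 1) = S R m - S R (m - 1) := by
  rw [sub_sub (-m) 1 1, one_add_one_eq_two, S_neg_sub_one, S_neg_sub_two]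
  ring

theorem gN_eq_eval_chebyshevS (n : ℕ) (s : ℝ) : gN n s = (S ℝ n).eval (s + 2) := by
  induction n using Nat.twoStepInduction with
  | zero => simp [gN]
  | one => simp [gN]
  | more n ih ih' =>
    push_cast at ih' ⊢
    simp [gN, S_add_two, ih, ih']

theorem gZ_eq_eval_chebyshevS (m : ℤ) (s : ℝ) : gZ m s = (S ℝ m).eval (s + 2) := by
  match m with
  | Int.ofNat n => exact gN_eq_eval_chebyshevS n s
  | Int.negSucc 0 => simp [gZ]
  | Int.negSucc (n + 1) =>
    have reflection : S ℝ (Int.negSucc (n + 1)) = -S ℝ n := by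
      rw [← S_neg_sub_two, Int.negSucc_eq]
      congr 1
      lia
    simp [reflection, gZ, gN_eq_eval_chebyshevS]

theorem fN_eq_eval_chebyshevS_sub (n : ℕ) (s : ℝ) :
    fN n s = (S ℝ n - S ℝ (n - 1)).eval (s + 2) := by
  induction n using Nat.twoStepInduction with
  | zero => simp [fN]
  | one =>
    simp only [fN, Nat.cast_one, sub_self, S_one, S_zero, eval_sub, eval_X, eval_one]
    ring
  | more n ih ih' =>
    have index_eq : (n : ℤ) + 2 - 1 = n + 1 := by ring
    push_cast at ih' ⊢
    rw [add_sub_cancel_right] at ih'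
    simp only [fN, ih, ih', index_eq, S_add_two, S_sub_one ℝ n, eval_sub, eval_mul, eval_X]
    ring

theorem fZ_eq_eval_chebyshevS_sub (m : ℤ) (s : ℝ) :
    fZ m s = (S ℝ m - S ℝ (m - 1)).eval (s + 2) := by
  match m with
  | Int.ofNat n => exact fN_eq_eval_chebyshevS_sub n s
  | Int.negSucc n =>
    rw [fZ, Int.negSucc_eq, neg_add', chebyshevS_neg_sub_one_sub]
    exact fN_eq_eval_chebyshevS_sub n s

end Chebyshev

/-- For every integer `m`, `f_m² = s·g_m·g_{m-1} + 1`. -/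
theorem f_sq_eq (m : ℤ) (s : ℝ) : (fZ m s) ^ 2 = s * gZ m s * gZ (m - 1) s + 1 := by
  rw [fZ_eq_eval_chebyshevS_sub, gZ_eq_eval_chebyshevS, gZ_eq_eval_chebyshevS]
  have identity_at := congrArg (Polynomial.eval (s + 2)) (chebyshevS_sub_sq ℝ m)
  simpa using identity_at
end

section
/- Let s > 0 be a real number. Then: (1) for every integer m ≥ 1, s·g_{m-1}(s) < 4·f_m(s); (2) for every integer m ≤ -1, -s·g_{m-1}(s) < 4·f_{m-1}(s); (3) for every integer m ≤ -1, -2s·g_{m-1}(s) < 3·f_{m-1}(s). -/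
/-!
The differences `f_{m+1} - f_m` satisfy the same recursion as `s * g_m` and agree with it initially,
so `s * g_{m-1} = f_m - f_{m-1}` for every integer `m`. For `s ≥ 0` all `f_m` are positive, hence
`s * g_{m-1} < f_m` and `-(s * g_{m-1}) < f_{m-1}`; the constants `4` and `3 / 2` only weaken these.
-/

theorem fN_add_two (n : ℕ) (s : ℝ) : fN (n + 2) s = (s + 2) * fN (n + 1) s - fN n s := by
  simp only [fN]

theorem gN_add_two (n : ℕ) (s : ℝ) : gN (n + 2) s = (s + 2) * gN (n + 1) s - gN n s := by
  simp only [gN]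

theorem fN_succ_sub_fN (s : ℝ) : ∀ n : ℕ, fN (n + 1) s - fN n s = s * gN n s
  | 0 => by simp [fN, gN]
  | 1 => by simp only [fN, gN]; ring
  | n + 2 => by
    linear_combination (s + 2) * fN_succ_sub_fN s (n + 1) - fN_succ_sub_fN s n +
      fN_add_two (n + 1) s - fN_add_two n s - s * gN_add_two n s

theorem fZ_add_one_sub_fZ (s : ℝ) : ∀ m : ℤ, fZ (m + 1) s - fZ m s = s * gZ m s
  | Int.ofNat n => fN_succ_sub_fN s n
  | Int.negSucc 0 => by simp [fZ, gZ]
  | Int.negSucc (n + 1) => by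
    change fN n s - fN (n + 1) s = s * -gN n s
    linear_combination -fN_succ_sub_fN s n

theorem fN_pos_and_le_succ {s : ℝ} (hs : 0 ≤ s) (n : ℕ) :
    0 < fN n s ∧ fN n s ≤ fN (n + 1) s := by
  induction n with
  | zero => simpa [fN] using hs
  | succ n ih =>
    obtain ⟨hpos, hle⟩ := ih
    have hpos' : 0 < fN (n + 1) s := hpos.trans_le hle
    have increment : fN (n + 2) s - fN (n + 1) s =
        s * fN (n + 1) s + (fN (n + 1) s - fN n s) := by
      rw [fN_add_two]; ring
    have hprod : 0 ≤ s * fN (n + 1) s := mul_nonneg hs hpos'.le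
    exact ⟨hpos', by linarith⟩

theorem fZ_pos {s : ℝ} (hs : 0 ≤ s) : ∀ m : ℤ, 0 < fZ m s
  | Int.ofNat n => (fN_pos_and_le_succ hs n).1
  | Int.negSucc n => (fN_pos_and_le_succ hs n).1

theorem fg_inequalities_general {s : ℝ} (hs : 0 ≤ s) {c : ℝ} (hc : 1 ≤ c) (m : ℤ) :
    s * gZ (m - 1) s < c * fZ m s ∧ -(s * gZ (m - 1) s) < c * fZ (m - 1) s := by
  have difference : fZ m s - fZ (m - 1) s = s * gZ (m - 1) s := by
    simpa using fZ_add_one_sub_fZ s (m - 1)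
  have hpos : 0 < fZ m s := fZ_pos hs m
  have hpos' : 0 < fZ (m - 1) s := fZ_pos hs (m - 1)
  constructor
  · calc s * gZ (m - 1) s < fZ m s := by linarith
      _ ≤ c * fZ m s := le_mul_of_one_le_left hpos.le hc
  · calc -(s * gZ (m - 1) s) < fZ (m - 1) s := by linarith
      _ ≤ c * fZ (m - 1) s := le_mul_of_one_le_left hpos'.le hc

/-- Inequalities satisfied by `f` and `g` for a positive real argument `s`. -/
theorem fg_inequalities (s : ℝ) (hs : 0 < s) :
    (∀ m : ℤ, 1 ≤ m → s * gZ (m - 1) s < 4 * fZ m s) ∧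
    (∀ m : ℤ, m ≤ -1 → -(s * gZ (m - 1) s) < 4 * fZ (m - 1) s) ∧
    (∀ m : ℤ, m ≤ -1 → -(2 * s * gZ (m - 1) s) < 3 * fZ (m - 1) s) :=
  ⟨fun m _ ↦ (fg_inequalities_general hs.le (by norm_num) m).1,
    fun m _ ↦ (fg_inequalities_general hs.le (by norm_num) m).2,
    fun m _ ↦ by linarith [(fg_inequalities_general hs.le (c := 3 / 2) (by norm_num) m).2]⟩
end

section
/- Let s be a real number, t > 0 a real number, and m an integer. Then the 2×2 real matrix W = (XY⁻¹)^m (X⁻¹Y)^m equals the matrix with (1,1)-entry f_m(s)² - s·t·g_{m-1}(s)², (1,2)-entry f_{m-1}(s)g_{m-1}(s) - f_m(s)g_{m-1}(s)/t, (2,1)-entry s·f_m(s)g_{m-1}(s) - s·t·f_{m-1}(s)g_{m-1}(s), and (2,2)-entry f_{m-1}(s)² - (s/t)·g_{m-1}(s)². -/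
open Matrix

/-- The matrix `X = [[√t, 1/√t], [0, 1/√t]]`. -/
noncomputable def Xmat (t : ℝ) : Matrix (Fin 2) (Fin 2) ℝ :=
  !![Real.sqrt t, 1 / Real.sqrt t; 0, 1 / Real.sqrt t]

/-- The matrix `Y = [[√t, 0], [-s√t, 1/√t]]`. -/
noncomputable def Ymat (s t : ℝ) : Matrix (Fin 2) (Fin 2) ℝ :=
  !![Real.sqrt t, 0; -s * Real.sqrt t, 1 / Real.sqrt t]

/-!
Both `X Y⁻¹ = [[1 + s, 1], [s, 1]]` and `X⁻¹ Y = [[1 + s, -1/t], [-st, 1]]` have determinant `1` and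
trace `s + 2`. By Cayley–Hamilton, `A + A⁻¹ = tr A • 1` for such a matrix, so its powers satisfy the
recursion of the Chebyshev polynomials `S` evaluated at the trace:
`A ^ m = S_{m-1}(tr A) • A - S_{m-2}(tr A) • 1`. Since `g_m = S_m(s + 2)` and `f_m = g_m - g_{m-1}`,
this expresses the entries of both powers through `f` and `g`.
-/

section Powers

open Polynomial Polynomial.Chebyshev

variable {R : Type*} [CommRing R]

section Units

variable {B : Type*} [Ring B] [Algebra R B] {u : Bˣ} {τ : R}

theorem units_zpow_eq_eval_S (hu : (u : B) + ↑u⁻¹ = τ • 1) (m : ℤ) :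
    (↑(u ^ m) : B) = (S R (m - 1)).eval τ • (u : B) - (S R (m - 2)).eval τ • 1 := by
  have u_sq : (u : B) * u = τ • (u : B) - 1 := by
    rw [eq_sub_iff_add_eq, ← u.inv_mul, ← add_mul, hu, smul_one_mul]
  have u_inv : (↑u⁻¹ : B) = τ • 1 - (u : B) := eq_sub_of_add_eq' hu
  induction m with
  | zero => simp
  | succ n ih =>
    have hS : (S R n).eval τ = τ * (S R (n - 1)).eval τ - (S R (n - 2)).eval τ := by
      simp [S_eq R n]
    have hidx : (n : ℤ) + 1 - 2 = n - 1 := by ring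
    rw [_root_.zpow_add_one, Units.val_mul, ih, sub_mul, smul_mul_assoc, smul_one_mul, u_sq,
      add_sub_cancel_right, hidx, hS]
    module
  | pred n ih =>
    have hS : (S R (-n - 1 - 2)).eval τ =
        τ * (S R (-n - 2)).eval τ - (S R (-n - 1)).eval τ := by
      rw [S_sub_two, sub_sub, one_add_one_eq_two, eval_sub, eval_mul, eval_X]
    have hidx : -(n : ℤ) - 1 - 1 = -n - 2 := by ring
    rw [_root_.zpow_sub_one, Units.val_mul, ih, sub_mul, smul_mul_assoc, smul_one_mul, u.mul_inv,
      u_inv, hidx, hS]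
    module

end Units

theorem inv_eq_adjugate_of_det_eq_one {n : Type*} [Fintype n] [DecidableEq n] {A : Matrix n n R}
    (hA : A.det = 1) : A⁻¹ = A.adjugate := by
  rw [inv_def, hA, Ring.inverse_one, one_smul]

theorem add_adjugate_fin_two (A : Matrix (Fin 2) (Fin 2) R) : A + A.adjugate = A.trace • 1 := by
  rw [adjugate_fin_two, trace_fin_two]
  ext i j
  fin_cases i <;> fin_cases j <;> simp [add_comm]

theorem zpow_eq_eval_S_of_det_eq_one {A : Matrix (Fin 2) (Fin 2) R} (hA : A.det = 1) (m : ℤ) :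
    A ^ m = (S R (m - 1)).eval A.trace • A - (S R (m - 2)).eval A.trace • 1 := by
  let u : (Matrix (Fin 2) (Fin 2) R)ˣ := A.nonsingInvUnit (hA ▸ isUnit_one)
  have add_inv : A + A⁻¹ = A.trace • 1 := by
    rw [inv_eq_adjugate_of_det_eq_one hA, add_adjugate_fin_two]
  exact (coe_units_zpow u m).symm.trans (units_zpow_eq_eval_S add_inv m)

end Powers

section ChebyshevForm

open Polynomial.Chebyshev

theorem gN_eq_eval_S (s : ℝ) : ∀ n : ℕ, gN n s = (S ℝ n).eval (s + 2)
  | 0 => by simp [gN]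
  | 1 => by simp [gN]
  | n + 2 => by simp [gN, gN_eq_eval_S s (n + 1), gN_eq_eval_S s n]

theorem gZ_eq_eval_S (s : ℝ) : ∀ m : ℤ, gZ m s = (S ℝ m).eval (s + 2)
  | (n : ℕ) => gN_eq_eval_S s n
  | Int.negSucc 0 => by simp [gZ]
  | Int.negSucc (n + 1) => by
    have hn : Int.negSucc (n + 1) = -(n : ℤ) - 2 := by lia
    simp [hn, ← gN_eq_eval_S, gZ]

theorem fN_eq_eval_S_sub (s : ℝ) :
    ∀ n : ℕ, fN n s = (S ℝ n).eval (s + 2) - (S ℝ (n - 1)).eval (s + 2)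
  | 0 => by simp [fN]
  | 1 => by norm_num [fN, add_sub_assoc]
  | n + 2 => by
    have hidx : (n : ℤ) + 2 - 1 = n + 1 := by ring
    simp only [fN, fN_eq_eval_S_sub s (n + 1), fN_eq_eval_S_sub s n]
    push_cast
    rw [hidx, add_sub_cancel_right, S_add_two, S_add_one]
    simp only [Polynomial.eval_sub, Polynomial.eval_mul, Polynomial.eval_X]
    ring

theorem fZ_eq_gZ_sub_gZ (s : ℝ) (m : ℤ) : fZ m s = gZ m s - gZ (m - 1) s := by
  simp only [gZ_eq_eval_S]
  cases m with
  | ofNat n => exact fN_eq_eval_S_sub s n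
  | negSucc n =>
    have hidx : -((n : ℤ) + 1) - 1 = -n - 2 := by ring
    change fN n s = _
    rw [fN_eq_eval_S_sub, Int.negSucc_eq, hidx, neg_add', S_neg_sub_one, S_neg_sub_two,
      Polynomial.eval_neg, Polynomial.eval_neg, neg_sub_neg]

end ChebyshevForm

theorem zpow_fin_two_eq_of_mul_eq {s c d : ℝ} (hcd : c * d = s) (m : ℤ) :
    !![1 + s, c; d, 1] ^ m =
      !![fZ m s, c * gZ (m - 1) s; d * gZ (m - 1) s, fZ (m - 1) s] := by
  have hdet : det !![1 + s, c; d, 1] = 1 := by rw [det_fin_two_of, hcd]; ring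
  have htrace : trace !![1 + s, c; d, 1] = s + 2 := by rw [trace_fin_two_of]; ring
  have hg : gZ m s = (s + 2) * gZ (m - 1) s - gZ (m - 2) s := by
    simp [gZ_eq_eval_S, Polynomial.Chebyshev.S_eq ℝ m]
  have hidx : m - 1 - 1 = m - 2 := by ring
  rw [zpow_eq_eval_S_of_det_eq_one hdet, htrace, ← gZ_eq_eval_S, ← gZ_eq_eval_S,
    fZ_eq_gZ_sub_gZ, fZ_eq_gZ_sub_gZ, hidx, hg, one_fin_two]
  simp only [smul_of, smul_cons, smul_empty, smul_eq_mul, of_sub_of, sub_cons, head_cons,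
    tail_cons, empty_sub_empty]
  congrm !![?_, ?_; ?_, ?_] <;> ring

section Generators

variable {t : ℝ}

theorem inv_Xmat (ht : 0 < t) : (Xmat t)⁻¹ = !![1 / √t, -(1 / √t); 0, √t] := by
  have hdet : (Xmat t).det = 1 := by
    rw [Xmat, det_fin_two_of, mul_zero, sub_zero, mul_one_div_cancel (Real.sqrt_ne_zero'.2 ht)]
  rw [inv_eq_adjugate_of_det_eq_one hdet, Xmat, adjugate_fin_two_of, neg_zero]

theorem inv_Ymat (s : ℝ) (ht : 0 < t) : (Ymat s t)⁻¹ = !![1 / √t, 0; s * √t, √t] := by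
  have hdet : (Ymat s t).det = 1 := by
    rw [Ymat, det_fin_two_of, zero_mul, sub_zero, mul_one_div_cancel (Real.sqrt_ne_zero'.2 ht)]
  rw [inv_eq_adjugate_of_det_eq_one hdet, Ymat, adjugate_fin_two_of, neg_zero, neg_mul, neg_neg]

theorem Xmat_mul_inv_Ymat (s : ℝ) (ht : 0 < t) :
    Xmat t * (Ymat s t)⁻¹ = !![1 + s, 1; s, 1] := by
  have hsqrt : √t ≠ 0 := Real.sqrt_ne_zero'.2 ht
  rw [inv_Ymat s ht, Xmat, mul_fin_two]
  congrm !![?_, ?_; ?_, ?_] <;> field_simp <;> ring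

theorem inv_Xmat_mul_Ymat (s : ℝ) (ht : 0 < t) :
    (Xmat t)⁻¹ * Ymat s t = !![1 + s, -(1 / t); -(s * t), 1] := by
  have hsqrt : √t ≠ 0 := Real.sqrt_ne_zero'.2 ht
  have hsq : √t * √t = t := Real.mul_self_sqrt ht.le
  rw [inv_Xmat ht, Ymat, mul_fin_two]
  congrm !![?_, ?_; ?_, ?_]
  · field_simp
  · rw [mul_zero, zero_add, neg_mul, one_div_mul_one_div, hsq]
  · linear_combination (-s) * hsq
  · rw [zero_mul, zero_add, mul_one_div_cancel hsqrt]

end Generators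

/-- Entries of `W = (XY⁻¹)^m (X⁻¹Y)^m`. -/
theorem W_entries (s t : ℝ) (ht : 0 < t) (m : ℤ) :
    (Xmat t * (Ymat s t)⁻¹) ^ m * ((Xmat t)⁻¹ * Ymat s t) ^ m =
      !![fZ m s ^ 2 - s * t * gZ (m - 1) s ^ 2,
         fZ (m - 1) s * gZ (m - 1) s - fZ m s * gZ (m - 1) s / t;
         s * fZ m s * gZ (m - 1) s - s * t * fZ (m - 1) s * gZ (m - 1) s,
         fZ (m - 1) s ^ 2 - s / t * gZ (m - 1) s ^ 2] := by
  have ht' : t ≠ 0 := ht.ne'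
  rw [Xmat_mul_inv_Ymat s ht, inv_Xmat_mul_Ymat s ht, zpow_fin_two_eq_of_mul_eq (one_mul s),
    zpow_fin_two_eq_of_mul_eq (by field_simp : -(1 / t) * -(s * t) = s), mul_fin_two]
  congrm !![?_, ?_; ?_, ?_] <;> field_simp <;> ring
end

section
/- Let m be a nonzero integer and let s, t be real numbers with s > 0, t > 1, and s + 2 < t + 1/t. Then the (1,2)-entry of W = (XY⁻¹)^m (X⁻¹Y)^m is nonzero; equivalently, g_{m-1}(s)·(f_{m-1}(s) - f_m(s)/t) ≠ 0. -/
open Matrix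

/-! `XY⁻¹` and `X⁻¹Y` both have the form `!![s + 1, b; c, 1]` with `b * c = s`. The `m`-th power of
such a matrix is `!![f_m, b * g_{m-1}; c * g_{m-1}, f_{m-1}]` for every integer `m`, which gives the
`(1,2)`-entry of `W`. Since these powers have determinant `1`, the quadratic form
`x² - (s + 2)xy + y²` takes the value `-s` at every `(f_{m+1}, f_m)`. If `f_{m+1} = t f_m`, that
value would be `(t² - (s + 2)t + 1) f_m²`, which is nonnegative when `t > 0` and `s + 2 ≤ t + 1/t`,
whereas `-s < 0`. -/

theorem det_zpow {n K : Type*} [Fintype n] [DecidableEq n] [Field K] (A : Matrix n n K) :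
    ∀ m : ℤ, (A ^ m).det = A.det ^ m
  | Int.ofNat k => by simp
  | Int.negSucc k => by simp [zpow_negSucc, det_nonsing_inv]

theorem fN_succ_and_gN_succ (s : ℝ) (n : ℕ) :
    fN (n + 1) s = fN n s + s * gN n s ∧ gN (n + 1) s = gN n s + fN (n + 1) s := by
  induction n with
  | zero => constructor <;> simp only [fN, gN] <;> ring
  | succ n ih =>
    obtain ⟨hf, hg⟩ := ih
    have hf_rec : fN (n + 2) s = (s + 2) * fN (n + 1) s - fN n s := rfl
    have hg_rec : gN (n + 2) s = (s + 2) * gN (n + 1) s - gN n s := rfl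
    constructor
    · linear_combination hf_rec + hf - s * hg
    · linear_combination hg_rec - hf_rec - hf + (s + 1) * hg

theorem fZ_add_one (s : ℝ) : ∀ m : ℤ, fZ (m + 1) s = fZ m s + s * gZ m s
  | Int.ofNat n => (fN_succ_and_gN_succ s n).1
  | Int.negSucc 0 => show fN 0 s = fN 0 s + s * 0 by ring
  | Int.negSucc (n + 1) => by
    change fN n s = fN (n + 1) s + s * -gN n s
    linear_combination -(fN_succ_and_gN_succ s n).1

theorem gZ_add_one (s : ℝ) : ∀ m : ℤ, gZ (m + 1) s = gZ m s + fZ (m + 1) s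
  | Int.ofNat n => (fN_succ_and_gN_succ s n).2
  | Int.negSucc 0 => show (1 : ℝ) = 0 + 1 by ring
  | Int.negSucc 1 => show (0 : ℝ) = -1 + 1 by ring
  | Int.negSucc (n + 2) => by
    change -gN n s = -gN (n + 1) s + fN (n + 1) s
    linear_combination (fN_succ_and_gN_succ s n).2

theorem fN_pos_and_gN_pos {s : ℝ} (hs : 0 ≤ s) (n : ℕ) : 0 < fN n s ∧ 0 < gN n s := by
  induction n with
  | zero => simp [fN, gN]
  | succ n ih =>
    obtain ⟨hf, hg⟩ := ih
    obtain ⟨hf_succ, hg_succ⟩ := fN_succ_and_gN_succ s n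
    have hf' : 0 < fN (n + 1) s := by rw [hf_succ]; positivity
    exact ⟨hf', by rw [hg_succ]; positivity⟩

theorem gZ_ne_zero {s : ℝ} (hs : 0 ≤ s) : ∀ {m : ℤ}, m ≠ -1 → gZ m s ≠ 0
  | Int.ofNat n, _ => (fN_pos_and_gN_pos hs n).2.ne'
  | Int.negSucc 0, hm => absurd rfl hm
  | Int.negSucc (n + 1), _ => neg_ne_zero.2 (fN_pos_and_gN_pos hs n).2.ne'

theorem fin_two_zpow_eq_fZ_gZ {s b c : ℝ} (hbc : b * c = s) (m : ℤ) :
    !![s + 1, b; c, 1] ^ m =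
      !![fZ m s, b * gZ (m - 1) s; c * gZ (m - 1) s, fZ (m - 1) s] := by
  have hdet : IsUnit (!![s + 1, b; c, 1] : Matrix (Fin 2) (Fin 2) ℝ).det := by
    simp [det_fin_two_of, hbc]
  have mul_step (k : ℤ) :
      !![fZ k s, b * gZ (k - 1) s; c * gZ (k - 1) s, fZ (k - 1) s] * !![s + 1, b; c, 1] =
        !![fZ (k + 1) s, b * gZ k s; c * gZ k s, fZ k s] := by
    have hf := fZ_add_one s (k - 1)
    have hg := gZ_add_one s (k - 1)
    rw [sub_add_cancel] at hf hg
    rw [mul_fin_two, fZ_add_one s k, hg, hf, ← hbc]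
    congrm !![?_, ?_; ?_, ?_] <;> ring
  induction m using Int.induction_on with
  | zero =>
    change 1 = !![1, b * 0; c * 0, 1]
    rw [mul_zero, mul_zero, one_fin_two]
  | succ n ih => rw [zpow_add_one hdet, ih, mul_step, add_sub_cancel_right]
  | pred n ih =>
    have h := mul_step (-n - 1)
    rw [sub_add_cancel] at h
    rw [zpow_sub_one hdet, ih, ← h, mul_nonsing_inv_cancel_right _ _ hdet]

theorem fZ_add_one_mul_fZ_sub_gZ_sq (s : ℝ) (m : ℤ) :
    fZ (m + 1) s * fZ m s - s * gZ m s ^ 2 = 1 := by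
  have hdet := congrArg det (fin_two_zpow_eq_fZ_gZ (one_mul s) (m + 1))
  have hdet_base : !![s + 1, 1; s, 1].det = 1 := by rw [det_fin_two_of]; ring
  rw [det_zpow, hdet_base, _root_.one_zpow, det_fin_two_of, add_sub_cancel_right] at hdet
  linear_combination -hdet

theorem fZ_quadratic_form (s : ℝ) (m : ℤ) :
    fZ (m + 1) s ^ 2 - (s + 2) * fZ (m + 1) s * fZ m s + fZ m s ^ 2 = -s := by
  have hdet := fZ_add_one_mul_fZ_sub_gZ_sq s m
  rw [fZ_add_one] at hdet ⊢
  linear_combination -s * hdet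

theorem fZ_add_one_ne_mul_fZ {s t : ℝ} (hs : 0 < s) (hst : (s + 2) * t ≤ t ^ 2 + 1) (m : ℤ) :
    fZ (m + 1) s ≠ t * fZ m s := by
  intro heq
  have hform := fZ_quadratic_form s m
  rw [heq] at hform
  have hnonneg : 0 ≤ (t ^ 2 + 1 - (s + 2) * t) * fZ m s ^ 2 :=
    mul_nonneg (sub_nonneg.2 hst) (sq_nonneg _)
  linarith

theorem Xmat_inv {t : ℝ} (ht : 0 < t) : (Xmat t)⁻¹ = !![1 / √t, -(1 / √t); 0, √t] := by
  have hdet : (Xmat t).det = 1 := by simp [Xmat, det_fin_two_of, (Real.sqrt_pos.2 ht).ne']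
  rw [inv_def, hdet, Ring.inverse_one, one_smul, Xmat, adjugate_fin_two_of, neg_zero]

theorem Ymat_inv (s : ℝ) {t : ℝ} (ht : 0 < t) :
    (Ymat s t)⁻¹ = !![1 / √t, 0; s * √t, √t] := by
  have hdet : (Ymat s t).det = 1 := by simp [Ymat, det_fin_two_of, (Real.sqrt_pos.2 ht).ne']
  rw [inv_def, hdet, Ring.inverse_one, one_smul, Ymat, adjugate_fin_two_of, neg_zero, neg_mul,
    neg_neg]

theorem Xmat_mul_Ymat_inv (s : ℝ) {t : ℝ} (ht : 0 < t) :
    Xmat t * (Ymat s t)⁻¹ = !![s + 1, 1; s, 1] := by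
  have hsqrt : √t ≠ 0 := (Real.sqrt_pos.2 ht).ne'
  rw [Ymat_inv s ht, Xmat, mul_fin_two]
  congrm !![?_, ?_; ?_, ?_] <;> field_simp <;> ring

theorem Xmat_inv_mul_Ymat (s : ℝ) {t : ℝ} (ht : 0 < t) :
    (Xmat t)⁻¹ * Ymat s t = !![s + 1, -(1 / t); -(s * t), 1] := by
  obtain ⟨r, hr, rfl⟩ : ∃ r > 0, r ^ 2 = t := ⟨√t, Real.sqrt_pos.2 ht, Real.sq_sqrt ht.le⟩
  rw [Xmat_inv ht, Ymat, Real.sqrt_sq hr.le, mul_fin_two]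
  congrm !![?_, ?_; ?_, ?_] <;> field_simp <;> ring

theorem W_entry12_eq (m : ℤ) (s : ℝ) {t : ℝ} (ht : 0 < t) :
    ((Xmat t * (Ymat s t)⁻¹) ^ m * ((Xmat t)⁻¹ * Ymat s t) ^ m) 0 1 =
      gZ (m - 1) s * (fZ (m - 1) s - fZ m s / t) := by
  have hbc : -(1 / t) * -(s * t) = s := by field_simp
  rw [Xmat_mul_Ymat_inv s ht, Xmat_inv_mul_Ymat s ht, fin_two_zpow_eq_fZ_gZ (one_mul s),
    fin_two_zpow_eq_fZ_gZ hbc, mul_fin_two]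
  change fZ m s * (-(1 / t) * gZ (m - 1) s) + 1 * gZ (m - 1) s * fZ (m - 1) s = _
  ring

theorem W_entry12_ne_zero_general (m : ℤ) (hm : m ≠ 0) (s t : ℝ) (hs : 0 < s) (ht : 0 < t)
    (hst : s + 2 ≤ t + 1 / t) :
    ((Xmat t * (Ymat s t)⁻¹) ^ m * ((Xmat t)⁻¹ * Ymat s t) ^ m) 0 1 ≠ 0 ∧
    gZ (m - 1) s * (fZ (m - 1) s - fZ m s / t) ≠ 0 := by
  rw [W_entry12_eq m s ht, and_self]
  have hg : gZ (m - 1) s ≠ 0 := gZ_ne_zero hs.le (by lia)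
  have hquad : (s + 2) * t ≤ t ^ 2 + 1 :=
    calc (s + 2) * t ≤ (t + 1 / t) * t := by gcongr
      _ = t ^ 2 + 1 := by field_simp
  have hf : fZ m s ≠ t * fZ (m - 1) s := by
    simpa only [sub_add_cancel] using fZ_add_one_ne_mul_fZ hs hquad (m - 1)
  refine mul_ne_zero hg (sub_ne_zero.2 fun heq => hf ?_)
  rw [heq, mul_div_cancel₀ _ ht.ne']

/-- The `(1,2)`-entry of `W = (XY⁻¹)^m (X⁻¹Y)^m` is nonzero; equivalently
`g_{m-1}(s)·(f_{m-1}(s) - f_m(s)/t) ≠ 0`. -/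
theorem W_entry12_ne_zero (m : ℤ) (hm : m ≠ 0) (s t : ℝ) (hs : 0 < s) (ht : 1 < t)
    (h1 : s + 2 < t + 1 / t) :
    ((Xmat t * (Ymat s t)⁻¹) ^ m * ((Xmat t)⁻¹ * Ymat s t) ^ m) 0 1 ≠ 0 ∧
    gZ (m - 1) s * (fZ (m - 1) s - fZ m s / t) ≠ 0 :=
  W_entry12_ne_zero_general m hm s t hs (zero_lt_one.trans ht) h1.le
end

section
/- Let k ≥ 2 be an integer and set θ = 3π/(2k+1). Then U_{k-1}(cos θ) = U_k(cos θ), and this common value equals sin(3kπ/(2k+1))/sin(3π/(2k+1)), which is negative. -/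
open Polynomial Real

/-!
Since `U_{k-1}(cos θ)` and `U_k(cos θ)` are `sin (kθ) / sin θ` and `sin ((k+1)θ) / sin θ`, they
agree as soon as `kθ + (k+1)θ = (2k+1)θ` is an odd multiple `(2m+1)π` of `π`. In that case `kθ` is
`mπ + (π/2 - θ/2)`, so `sin (kθ) = (-1)^m cos (θ/2)`, and for `0 < θ < π` the common value has the
sign of `(-1)^m`. The angle `θ = 3π/(2k+1)` is the case `m = 1`.
-/

section

variable {θ : ℝ} {k m : ℤ}

theorem eval_U_sub_one_cos (hθ : sin θ ≠ 0) (n : ℤ) :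
    (Chebyshev.U ℝ (n - 1)).eval (cos θ) = sin (n * θ) / sin θ := by
  rw [eq_div_iff hθ, Chebyshev.U_real_cos, Int.cast_sub, Int.cast_one, sub_add_cancel]

theorem eval_U_sub_one_cos_eq_eval_U_cos (hθ : sin θ ≠ 0)
    (h : (2 * k + 1) * θ = (2 * m + 1) * π) :
    (Chebyshev.U ℝ (k - 1)).eval (cos θ) = (Chebyshev.U ℝ k).eval (cos θ) := by
  have h_sin : sin (k * θ) = sin ((k + 1) * θ) :=
    sin_eq_sin_iff.mpr ⟨m, Or.inr (by linear_combination h)⟩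
  rw [eval_U_sub_one_cos hθ, h_sin, div_eq_iff hθ, Chebyshev.U_real_cos]

theorem sin_mul_eq_neg_one_zpow_mul_cos_half {x : ℝ}
    (h : (2 * x + 1) * θ = (2 * m + 1) * π) :
    sin (x * θ) = (-1) ^ m * cos (θ / 2) := by
  have h_angle : x * θ = π / 2 - θ / 2 + m * π := by linear_combination h / 2
  rw [h_angle, sin_add_int_mul_pi, sin_pi_div_two_sub]

theorem eval_U_sub_one_cos_neg (hm : Odd m) (h : (2 * k + 1) * θ = (2 * m + 1) * π)
    (hθ_pos : 0 < θ) (hθ_lt : θ < π) :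
    (Chebyshev.U ℝ (k - 1)).eval (cos θ) < 0 := by
  have h_sin : 0 < sin θ := sin_pos_of_pos_of_lt_pi hθ_pos hθ_lt
  have h_cos : 0 < cos (θ / 2) := cos_pos_of_mem_Ioo ⟨by linarith, by linarith⟩
  rw [eval_U_sub_one_cos h_sin.ne', sin_mul_eq_neg_one_zpow_mul_cos_half h, hm.neg_one_zpow,
    neg_one_mul]
  exact div_neg_of_neg_of_pos (neg_neg_of_pos h_cos) h_sin

end

/-- For `k ≥ 2` and `θ = 3π/(2k+1)`, `U_{k-1}(cos θ) = U_k(cos θ)`, and this common value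
equals `sin(3kπ/(2k+1))/sin(3π/(2k+1))`, which is negative. -/
theorem chebyshev_value_neg (k : ℤ) (hk : 2 ≤ k) :
    (Polynomial.Chebyshev.U ℝ (k - 1)).eval (Real.cos (3 * π / (2 * k + 1))) =
      (Polynomial.Chebyshev.U ℝ k).eval (Real.cos (3 * π / (2 * k + 1))) ∧
    (Polynomial.Chebyshev.U ℝ (k - 1)).eval (Real.cos (3 * π / (2 * k + 1))) =
      Real.sin (3 * k * π / (2 * k + 1)) / Real.sin (3 * π / (2 * k + 1)) ∧
    (Polynomial.Chebyshev.U ℝ (k - 1)).eval (Real.cos (3 * π / (2 * k + 1))) < 0 := by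
  have hk_real : (2 : ℝ) ≤ k := mod_cast hk
  have h_den : (0 : ℝ) < 2 * k + 1 := by linarith
  have h_angle : 3 * k * π / (2 * k + 1) = k * (3 * π / (2 * k + 1)) := by ring
  have h_odd_mul : (2 * k + 1) * (3 * π / (2 * k + 1)) = (2 * (1 : ℤ) + 1) * π := by
    rw [mul_div_cancel₀ _ h_den.ne']
    norm_num
  have h_pos : 0 < 3 * π / (2 * k + 1) := by positivity
  have h_lt : 3 * π / (2 * k + 1) < π := by
    rw [div_lt_iff₀' h_den]
    gcongr
    linarith
  have h_sin : sin (3 * π / (2 * k + 1)) ≠ 0 := (sin_pos_of_pos_of_lt_pi h_pos h_lt).ne'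
  rw [h_angle]
  exact ⟨eval_U_sub_one_cos_eq_eval_U_cos h_sin h_odd_mul, eval_U_sub_one_cos h_sin k,
    eval_U_sub_one_cos_neg odd_one h_odd_mul h_pos h_lt⟩
end

section
/- Let s, t be real numbers with s > 0, t > 1 and t + 1/t > s + 2, and set σ = s·(√t - 1/√t)²/((√t - 1/√t)² - s). Let m be an integer, let U = (X'Y'⁻¹)^m (X'⁻¹Y')^m and U_* = (Y'X'⁻¹)^m (Y'⁻¹X')^m. Then for every integer n, writing v_{i,j} for the entries of U^n, one has U_*^n = [[v_{1,1}, v_{2,1}/σ], [v_{1,2}·σ, v_{2,2}]]. -/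
open Matrix

/-- The matrix `X' = [[√t, 0], [0, 1/√t]]`. -/
noncomputable def Xmat' (t : ℝ) : Matrix (Fin 2) (Fin 2) ℝ :=
  !![Real.sqrt t, 0; 0, 1 / Real.sqrt t]

/-- The matrix `Y' = [[(t-s-1)/(√t-1/√t), s/(√t-1/√t)² - 1], [-s, (s+1-1/t)/(√t-1/√t)]]`. -/
noncomputable def Ymat' (s t : ℝ) : Matrix (Fin 2) (Fin 2) ℝ :=
  !![(t - s - 1) / (Real.sqrt t - 1 / Real.sqrt t),
     s / (Real.sqrt t - 1 / Real.sqrt t) ^ 2 - 1;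
     -s, (s + 1 - 1 / t) / (Real.sqrt t - 1 / Real.sqrt t)]

/-!
Both `X'` and `Y'` are self-adjoint for the bilinear form `J = diag(σ, 1)`: for `X'` because it is
diagonal, for `Y'` because `σ` is precisely the ratio of its off-diagonal entries. Taking the
`J`-adjoint `A ↦ J⁻¹ Aᵀ J` reverses products and commutes with inverses, so it carries
`(X'Y'⁻¹)^m (X'⁻¹Y')^m` to the same word with `X'` and `Y'` exchanged.
-/

section AdjointPair

variable {ι R : Type*} [Fintype ι] [CommRing R] {J A A' B B' X Y : Matrix ι ι R}

theorem isAdjointPair_iff_semiconjBy : J.IsAdjointPair J A A' ↔ SemiconjBy J A' Aᵀ :=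
  eq_comm

theorem isAdjointPair_mul (hA : J.IsAdjointPair J A A') (hB : J.IsAdjointPair J B B') :
    J.IsAdjointPair J (A * B) (B' * A') := by
  rw [isAdjointPair_iff_semiconjBy] at hA hB ⊢
  rw [transpose_mul]
  exact hB.mul_right hA

variable [DecidableEq ι]

theorem isAdjointPair_pow (h : J.IsAdjointPair J A A') (k : ℕ) :
    J.IsAdjointPair J (A ^ k) (A' ^ k) := by
  rw [isAdjointPair_iff_semiconjBy] at h ⊢
  rw [transpose_pow]
  exact h.pow_right k

-- For non-invertible `A` both inverses are the junk value `0`.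
theorem isAdjointPair_inv (hJ : IsUnit J) (h : J.IsAdjointPair J A A') :
    J.IsAdjointPair J A⁻¹ A'⁻¹ := by
  obtain ⟨u, rfl⟩ := hJ
  have h_inv : SemiconjBy (↑u⁻¹ : Matrix ι ι R) Aᵀ⁻¹ A'⁻¹ := by
    rw [SemiconjBy, coe_units_inv, ← Matrix.mul_inv_rev, ← Matrix.mul_inv_rev, h]
  rw [isAdjointPair_iff_semiconjBy, transpose_nonsing_inv]
  simpa only [inv_inv] using h_inv.units_inv_symm_left

theorem isAdjointPair_zpow (hJ : IsUnit J) (h : J.IsAdjointPair J A A') :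
    ∀ k : ℤ, J.IsAdjointPair J (A ^ k) (A' ^ k)
  | (k : ℕ) => by simpa only [zpow_natCast] using isAdjointPair_pow h k
  | .negSucc k => by
    simpa only [zpow_negSucc] using isAdjointPair_inv hJ (isAdjointPair_pow h (k + 1))

theorem isAdjointPair_diagonal_iff {d : ι → R} :
    (diagonal d).IsAdjointPair (diagonal d) A A' ↔ ∀ i j, A j i * d j = d i * A' i j := by
  simp only [Matrix.IsAdjointPair, ← Matrix.ext_iff, mul_diagonal, diagonal_mul, transpose_apply]

/-- The word `(ab⁻¹)^m (a⁻¹b)^m`, so that `U = twistWord X' Y' m` and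
`U_* = twistWord Y' X' m`. -/
def twistWord {M : Type*} [DivInvMonoid M] (a b : M) (m : ℤ) : M :=
  (a * b⁻¹) ^ m * (a⁻¹ * b) ^ m

theorem isAdjointPair_twistWord_swap (hJ : IsUnit J) (hX : J.IsSelfAdjoint X)
    (hY : J.IsSelfAdjoint Y) (m : ℤ) :
    J.IsAdjointPair J (twistWord X Y m) (twistWord Y X m) :=
  have hX_inv := isAdjointPair_inv hJ hX
  have hY_inv := isAdjointPair_inv hJ hY
  isAdjointPair_mul (isAdjointPair_zpow hJ (isAdjointPair_mul hX hY_inv) m)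
    (isAdjointPair_zpow hJ (isAdjointPair_mul hX_inv hY) m)

end AdjointPair

section FinTwo

theorem isSelfAdjoint_diagonal_fin_two_iff {R : Type*} [CommRing R] {c : R}
    {A : Matrix (Fin 2) (Fin 2) R} :
    (diagonal ![c, 1]).IsSelfAdjoint A ↔ A 0 1 * c = A 1 0 := by
  simp [Matrix.IsSelfAdjoint, isAdjointPair_diagonal_iff, Fin.forall_fin_two, mul_comm c,
    eq_comm (a := A 1 0)]

variable {K : Type*} [Field K] {c : K} {A A' X Y : Matrix (Fin 2) (Fin 2) K}

theorem isUnit_diagonal_fin_two (hc : c ≠ 0) : IsUnit (diagonal ![c, 1]) := by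
  simp [isUnit_iff_isUnit_det, hc]

theorem eq_of_isAdjointPair_diagonal_fin_two (hc : c ≠ 0)
    (h : (diagonal ![c, 1]).IsAdjointPair (diagonal ![c, 1]) A A') :
    A' = !![A 0 0, A 1 0 / c; A 0 1 * c, A 1 1] := by
  simp only [isAdjointPair_diagonal_iff, Fin.forall_fin_two, cons_val_zero, cons_val_one,
    mul_one, one_mul] at h
  obtain ⟨⟨h₀₀, h₀₁⟩, h₁₀, h₁₁⟩ := h
  rw [eta_fin_two A', h₁₀, h₁₁, h₀₁, mul_div_cancel_left₀ _ hc,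
    mul_right_cancel₀ hc (h₀₀.trans (mul_comm _ _))]

theorem twistWord_swap_zpow_eq (hc : c ≠ 0) (hX : X 0 1 * c = X 1 0) (hY : Y 0 1 * c = Y 1 0)
    (m n : ℤ) :
    twistWord Y X m ^ n =
      !![(twistWord X Y m ^ n) 0 0, (twistWord X Y m ^ n) 1 0 / c;
         (twistWord X Y m ^ n) 0 1 * c, (twistWord X Y m ^ n) 1 1] := by
  have hJ : IsUnit (diagonal ![c, 1]) := isUnit_diagonal_fin_two hc
  rw [← isSelfAdjoint_diagonal_fin_two_iff] at hX hY
  exact eq_of_isAdjointPair_diagonal_fin_two hc <|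
    isAdjointPair_zpow hJ (isAdjointPair_twistWord_swap hJ hX hY m) n

end FinTwo

section RealMatrices

variable {s t : ℝ}

/-- The constant `σ`, by which the off-diagonal entries of `U^n` are rescaled in `U_*^n`. -/
noncomputable def sigma (s t : ℝ) : ℝ :=
  s * (√t - 1 / √t) ^ 2 / ((√t - 1 / √t) ^ 2 - s)

theorem sq_sqrt_sub_one_div_sqrt (ht : 0 < t) : (√t - 1 / √t) ^ 2 = t + 1 / t - 2 := by
  have h_sqrt : √t ≠ 0 := (Real.sqrt_pos.2 ht).ne'
  rw [sub_sq, _root_.one_div_pow, Real.sq_sqrt ht.le, mul_assoc, mul_one_div_cancel h_sqrt]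
  ring

theorem sqrt_sub_one_div_sqrt_ne_zero (ht : 0 < t) (ht_one : t ≠ 1) : √t - 1 / √t ≠ 0 := by
  rwa [sub_ne_zero, ne_eq, eq_div_iff (Real.sqrt_pos.2 ht).ne', Real.mul_self_sqrt ht.le]

theorem sigma_ne_zero (hs : s ≠ 0) (hw : √t - 1 / √t ≠ 0) (hws : (√t - 1 / √t) ^ 2 ≠ s) :
    sigma s t ≠ 0 :=
  div_ne_zero (mul_ne_zero hs (pow_ne_zero 2 hw)) (sub_ne_zero.2 hws)

theorem Xmat'_zero_one_mul (t c : ℝ) : Xmat' t 0 1 * c = Xmat' t 1 0 := by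
  simp [Xmat']

theorem Ymat'_zero_one_mul_sigma (hw : √t - 1 / √t ≠ 0) (hws : (√t - 1 / √t) ^ 2 ≠ s) :
    Ymat' s t 0 1 * sigma s t = Ymat' s t 1 0 := by
  have h_sub : (√t - 1 / √t) ^ 2 - s ≠ 0 := sub_ne_zero.2 hws
  simp only [Ymat', sigma, of_apply, cons_val_zero, cons_val_one]
  generalize √t - 1 / √t = w at *
  field_simp
  ring

theorem Ustar_pow_entries_general (hs : s ≠ 0) (ht : 0 < t) (ht_one : t ≠ 1)
    (hT : s + 2 ≠ t + 1 / t) (m n : ℤ) :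
    twistWord (Ymat' s t) (Xmat' t) m ^ n =
      !![(twistWord (Xmat' t) (Ymat' s t) m ^ n) 0 0,
         (twistWord (Xmat' t) (Ymat' s t) m ^ n) 1 0 / sigma s t;
         (twistWord (Xmat' t) (Ymat' s t) m ^ n) 0 1 * sigma s t,
         (twistWord (Xmat' t) (Ymat' s t) m ^ n) 1 1] := by
  have hw : √t - 1 / √t ≠ 0 := sqrt_sub_one_div_sqrt_ne_zero ht ht_one
  have hws : (√t - 1 / √t) ^ 2 ≠ s := by
    rw [sq_sqrt_sub_one_div_sqrt ht, ne_eq, sub_eq_iff_eq_add]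
    exact hT.symm
  exact twistWord_swap_zpow_eq (sigma_ne_zero hs hw hws) (Xmat'_zero_one_mul t _)
    (Ymat'_zero_one_mul_sigma hw hws) m n

end RealMatrices

/-- With `U = (X'Y'⁻¹)^m (X'⁻¹Y')^m` and `U_* = (Y'X'⁻¹)^m (Y'⁻¹X')^m`, for every integer `n`
the matrix `U_*^n` is obtained from `U^n = (v_{i,j})` as `[[v₁₁, v₂₁/σ], [v₁₂σ, v₂₂]]`,
where `σ = s(√t-1/√t)²/((√t-1/√t)² - s)`. -/
theorem Ustar_pow_entries (s t : ℝ) (hs : 0 < s) (ht : 1 < t)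
    (hT : s + 2 < t + 1 / t) (m : ℤ) :
    ∀ n : ℤ,
      ((Ymat' s t * (Xmat' t)⁻¹) ^ m * ((Ymat' s t)⁻¹ * Xmat' t) ^ m) ^ n =
      !![(((Xmat' t * (Ymat' s t)⁻¹) ^ m * ((Xmat' t)⁻¹ * Ymat' s t) ^ m) ^ n) 0 0,
         (((Xmat' t * (Ymat' s t)⁻¹) ^ m * ((Xmat' t)⁻¹ * Ymat' s t) ^ m) ^ n) 1 0 /
           (s * (Real.sqrt t - 1 / Real.sqrt t) ^ 2 / ((Real.sqrt t - 1 / Real.sqrt t) ^ 2 - s));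
         (((Xmat' t * (Ymat' s t)⁻¹) ^ m * ((Xmat' t)⁻¹ * Ymat' s t) ^ m) ^ n) 0 1 *
           (s * (Real.sqrt t - 1 / Real.sqrt t) ^ 2 / ((Real.sqrt t - 1 / Real.sqrt t) ^ 2 - s)),
         (((Xmat' t * (Ymat' s t)⁻¹) ^ m * ((Xmat' t)⁻¹ * Ymat' s t) ^ m) ^ n) 1 1] :=
  Ustar_pow_entries_general hs.ne' (by linarith) ht.ne' hT.ne m
end

section
/- Let m be a nonzero integer and let t : ℝ → ℝ be any function such that for every s > 0 one has t(s) > 1 and s + 2 < t(s) + 1/t(s) < s + 2 + 4/(s·g_{m-1}(s)²). Define B(s) = (-f_m(s) + t(s)·f_{m-1}(s)) / (-f_{m-1}(s) + t(s)·f_m(s)). Then B(s)·t(s)^{2m} tends to 1 as s → ∞. -/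
open Filter Topology

/-!
Let `r > 1` be the root of `r + 1/r = s + 2`. Then `(r + 1) f_m = r^(m+1) + r^(-m)`, so at `t = r`
the numerator and the denominator of `B` are `r^(-m) (r - 1)` and `r^m (r - 1)`, and `B t^(2m) = 1`
exactly. Passing from `r` to `t` multiplies them by `1 + (t - r) c_m` and `1 + (t - r) c_{-m}`,
where `c_{±m} = O(g_{m-1}²)` for `m ≠ 0` because `r^(|m|-1) ≤ |g_{m-1}|`. Since `t - r` is
comparable to `t + 1/t - (s + 2)`, it suffices that `(t + 1/t - (s + 2)) g_{m-1}² → 0`.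
-/

lemma fZ_natCast (n : ℕ) : fZ n = fN n := rfl

lemma gZ_natCast (n : ℕ) : gZ n = gN n := rfl

lemma fZ_neg (m : ℤ) : fZ (-m) = fZ (m - 1) := by
  rcases m with (_ | n) | n
  · rfl
  · rw [Int.ofNat_eq_natCast, Nat.cast_succ, add_sub_cancel_right]
    rfl
  · rfl

lemma gZ_neg_sub_one (m : ℤ) (s : ℝ) : gZ (-m - 1) s = -gZ (m - 1) s := by
  rcases m with (_ | n) | n
  · exact neg_zero.symm
  · rw [Int.ofNat_eq_natCast, Nat.cast_succ, add_sub_cancel_right]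
    rfl
  · rw [Int.neg_negSucc, Nat.cast_succ, add_sub_cancel_right]
    exact (neg_neg _).symm

section Root

variable {r s : ℝ}

lemma add_one_mul_fN (hr : r ≠ 0) (hrs : r + r⁻¹ = s + 2) (n : ℕ) :
    (r + 1) * fN n s = r ^ (n + 1) + r⁻¹ ^ n := by
  have hinv : r * r⁻¹ = 1 := mul_inv_cancel₀ hr
  induction n using Nat.twoStepInduction with
  | zero => simp [fN]
  | one =>
    simp only [fN]
    linear_combination -(r + 1) * hrs + hinv
  | more n ih₀ ih₁ =>
    simp only [fN, ← hrs]
    linear_combination (r + r⁻¹) * ih₁ - ih₀ + (r ^ (n + 1) + r⁻¹ ^ n) * hinv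

lemma add_one_mul_fZ (hr : r ≠ 0) (hrs : r + r⁻¹ = s + 2) (m : ℤ) :
    (r + 1) * fZ m s = r ^ (m + 1) + r ^ (-m) := by
  rcases m with n | n
  · rw [Int.ofNat_eq_natCast, fZ_natCast, add_one_mul_fN hr hrs, zpow_neg, zpow_natCast, inv_pow]
    norm_cast
  · have hexp : Int.negSucc n + 1 = -n := by rw [Int.negSucc_eq, neg_add, neg_add_cancel_right]
    rw [fZ, add_one_mul_fN hr hrs, Int.neg_negSucc, zpow_natCast, hexp, zpow_neg, zpow_natCast,
      inv_pow, add_comm]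

lemma gN_succ_eq (hr : r ≠ 0) (hrs : r + r⁻¹ = s + 2) (n : ℕ) :
    gN (n + 1) s = r * gN n s + r⁻¹ ^ (n + 1) := by
  have hinv : r * r⁻¹ = 1 := mul_inv_cancel₀ hr
  induction n with
  | zero =>
    simp only [gN]
    linear_combination -hrs
  | succ n ih =>
    simp only [gN, ← hrs]
    linear_combination r⁻¹ * ih + gN n s * hinv

lemma pow_le_gN (hr : 0 < r) (hrs : r + r⁻¹ = s + 2) (n : ℕ) : r ^ n ≤ gN n s := by
  induction n with
  | zero => simp [gN]
  | succ n ih =>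
    calc r ^ (n + 1) = r * r ^ n := pow_succ' r n
      _ ≤ r * gN n s := by gcongr
      _ ≤ r * gN n s + r⁻¹ ^ (n + 1) := le_add_of_nonneg_right (by positivity)
      _ = gN (n + 1) s := (gN_succ_eq hr.ne' hrs n).symm

lemma pow_natAbs_le_mul_abs_gZ (hr : 0 < r) (hrs : r + r⁻¹ = s + 2) {m : ℤ} (hm : m ≠ 0) :
    r ^ m.natAbs ≤ r * |gZ (m - 1) s| := by
  have nat_case (n : ℕ) : r ^ (n + 1) ≤ r * |gZ ((n + 1 : ℕ) - 1) s| := by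
    rw [Nat.cast_succ, add_sub_cancel_right, gZ_natCast, pow_succ']
    gcongr
    exact (pow_le_gN hr hrs n).trans (le_abs_self _)
  obtain ⟨n, hn⟩ := Nat.exists_eq_succ_of_ne_zero (Int.natAbs_ne_zero.2 hm)
  rw [hn]
  rcases Int.natAbs_eq m with h | h <;> rw [h, hn]
  · exact nat_case n
  · rw [gZ_neg_sub_one, abs_neg]
    exact nat_case n

/-- The coefficient `c_m = r^m f_{m-1} / (r - 1)`, written as a function of the root `r > 1` of
`r + 1/r = s + 2`: passing from `r` to `t` multiplies `t f_{m-1} - f_m` by `1 + (t - r) c_m`. -/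
noncomputable def relCoeff (m : ℤ) (r : ℝ) : ℝ :=
  (r ^ (2 * m) + r) / (r ^ 2 - 1)

lemma neg_fZ_add_mul_fZ_sub_one (hr : 1 < r) (hrs : r + r⁻¹ = s + 2) (m : ℤ) (t : ℝ) :
    -fZ m s + t * fZ (m - 1) s = r ^ (-m) * (r - 1) * (1 + (t - r) * relCoeff m r) := by
  have hr₀ : r ≠ 0 := by positivity
  have hadd : r + 1 ≠ 0 := by positivity
  have hsub : r - 1 ≠ 0 := (sub_pos.2 hr).ne'
  have hm : fZ m s = (r ^ m * r + (r ^ m)⁻¹) / (r + 1) := by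
    rw [eq_div_iff hadd, mul_comm, add_one_mul_fZ hr₀ hrs, zpow_add_one₀ hr₀, zpow_neg]
  have hm' : fZ (m - 1) s = (r ^ m + (r ^ m)⁻¹ * r) / (r + 1) := by
    rw [eq_div_iff hadd, mul_comm, add_one_mul_fZ hr₀ hrs, sub_add_cancel, neg_sub', sub_neg_eq_add,
      zpow_add_one₀ hr₀, zpow_neg]
  have hc : relCoeff m r = ((r ^ m) ^ 2 + r) / ((r + 1) * (r - 1)) := by
    rw [relCoeff, mul_comm 2 m, zpow_mul, zpow_ofNat]
    ring
  rw [hm, hm', hc, zpow_neg]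
  have : r ^ m ≠ 0 := zpow_ne_zero m hr₀
  field_simp
  ring

lemma B_mul_zpow_eq (hr : 1 < r) (hrs : r + r⁻¹ = s + 2) (m : ℤ) (t : ℝ) :
    (-fZ m s + t * fZ (m - 1) s) / (-fZ (m - 1) s + t * fZ m s) * t ^ (2 * m) =
      (1 + (t - r) * relCoeff m r) / (1 + (t - r) * relCoeff (-m) r) * (t / r) ^ (2 * m) := by
  have hden := neg_fZ_add_mul_fZ_sub_one hr hrs (-m) t
  rw [fZ_neg, ← neg_add', fZ_neg, add_sub_cancel_right, neg_neg] at hden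
  have hr₀ : r ≠ 0 := by positivity
  have hsub : r - 1 ≠ 0 := (sub_pos.2 hr).ne'
  have hratio : r ^ (-m) * (r - 1) / (r ^ m * (r - 1)) = (r ^ (2 * m))⁻¹ := by
    rw [mul_div_mul_right _ _ hsub, ← zpow_sub₀ hr₀, ← zpow_neg]
    ring_nf
  rw [neg_fZ_add_mul_fZ_sub_one hr hrs, hden, mul_div_mul_comm, hratio, div_zpow]
  ring

lemma inv_le_relCoeff (hr : 1 < r) (m : ℤ) : r⁻¹ ≤ relCoeff m r := by
  have : 0 < r ^ 2 - 1 := by nlinarith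
  have : 0 < r ^ (2 * m) := by positivity
  rw [relCoeff, inv_eq_one_div, div_le_div_iff₀ (by positivity) (by positivity)]
  nlinarith

lemma relCoeff_le (hr : 2 ≤ r) (hrs : r + r⁻¹ = s + 2) {m : ℤ} (hm : m ≠ 0) :
    relCoeff m r ≤ 4 * gZ (m - 1) s ^ 2 := by
  have hr₁ : 1 ≤ r := by linarith
  have hk : 1 ≤ m.natAbs := Int.natAbs_pos.2 hm
  have hpow : r ^ (2 * m) ≤ (r ^ m.natAbs) ^ 2 := by
    rw [← pow_mul, ← zpow_natCast]
    exact zpow_le_zpow_right₀ hr₁ (by omega)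
  have hlin : r ≤ (r ^ m.natAbs) ^ 2 := by
    rw [← pow_mul]
    exact le_self_pow₀ hr₁ (by omega)
  have hg : (r ^ m.natAbs) ^ 2 ≤ r ^ 2 * gZ (m - 1) s ^ 2 := by
    rw [← sq_abs (gZ _ _), ← mul_pow]
    gcongr
    exact pow_natAbs_le_mul_abs_gZ (by positivity) hrs hm
  rw [relCoeff, div_le_iff₀ (by nlinarith)]
  nlinarith [mul_nonneg (sq_nonneg (gZ (m - 1) s)) (show 0 ≤ r ^ 2 - 2 by nlinarith)]

lemma abs_sub_root_le (hr : 2 ≤ r) (hrs : r + r⁻¹ = s + 2) {t : ℝ} (ht : 1 < t) :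
    |t - r| ≤ 2 * |t + 1 / t - (s + 2)| := by
  have hfactor : t + 1 / t - (s + 2) = (t - r) * (1 - (t * r)⁻¹) := by
    rw [← hrs]
    field_simp
    ring
  have hinv : (t * r)⁻¹ ≤ 2⁻¹ := by
    gcongr
    nlinarith
  have hhalf : 2⁻¹ ≤ |1 - (t * r)⁻¹| := (by linarith : _ ≤ 1 - (t * r)⁻¹).trans (le_abs_self _)
  rw [hfactor, abs_mul]
  nlinarith [abs_nonneg (t - r)]

lemma abs_sub_root_mul_relCoeff_le (hr : 2 ≤ r) (hrs : r + r⁻¹ = s + 2) {t : ℝ} (ht : 1 < t)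
    {m : ℤ} (hm : m ≠ 0) :
    |(t - r) * relCoeff m r| ≤ 8 * |(t + 1 / t - (s + 2)) * gZ (m - 1) s ^ 2| := by
  have hc : 0 ≤ relCoeff m r := by
    have hr₀ : 0 ≤ r⁻¹ := by positivity
    exact hr₀.trans (inv_le_relCoeff (by linarith) m)
  calc |(t - r) * relCoeff m r| = |t - r| * relCoeff m r := by rw [abs_mul, abs_of_nonneg hc]
    _ ≤ 2 * |t + 1 / t - (s + 2)| * (4 * gZ (m - 1) s ^ 2) := by
      gcongr
      exacts [abs_sub_root_le hr hrs ht, relCoeff_le hr hrs hm]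
    _ = 8 * |(t + 1 / t - (s + 2)) * gZ (m - 1) s ^ 2| := by
      rw [abs_mul, abs_of_nonneg (sq_nonneg (gZ _ _))]
      ring

end Root

/-- The root `r > 1` of `r + 1/r = s + 2` for `s > 0`. -/
noncomputable def dominantRoot (s : ℝ) : ℝ :=
  (s + 2 + √((s + 2) ^ 2 - 4)) / 2

lemma one_add_le_dominantRoot {s : ℝ} (hs : 0 ≤ s) : 1 + s ≤ dominantRoot s := by
  have : s ≤ √((s + 2) ^ 2 - 4) := Real.le_sqrt_of_sq_le (by nlinarith)
  rw [dominantRoot]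
  linarith

lemma dominantRoot_add_inv {s : ℝ} (hs : 0 ≤ s) :
    dominantRoot s + (dominantRoot s)⁻¹ = s + 2 := by
  have hsq : √((s + 2) ^ 2 - 4) ^ 2 = (s + 2) ^ 2 - 4 := Real.sq_sqrt (by nlinarith)
  have hne : s + 2 + √((s + 2) ^ 2 - 4) ≠ 0 := by positivity
  rw [dominantRoot]
  field_simp
  linear_combination hsq

lemma tendsto_mul_sq_of_le_div {x g : ℝ → ℝ} {C : ℝ} (hC : 0 ≤ C)
    (h : ∀ᶠ s in atTop, 0 ≤ x s ∧ x s ≤ C / (s * g s ^ 2)) :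
    Tendsto (fun s => x s * g s ^ 2) atTop (𝓝 0) := by
  have hdecay : Tendsto (fun s : ℝ => C / s) atTop (𝓝 0) :=
    tendsto_const_nhds.div_atTop tendsto_id
  refine squeeze_zero' ?_ ?_ hdecay
  · filter_upwards [h] with s hs using mul_nonneg hs.1 (sq_nonneg _)
  · filter_upwards [h, eventually_gt_atTop 0] with s hs hs₀
    rw [← div_div] at hs
    exact mul_le_of_le_div₀ (by positivity) (sq_nonneg _) hs.2

section Limit

variable {m : ℤ} {t : ℝ → ℝ}

lemma tendsto_sub_dominantRoot_mul_relCoeff (hm : m ≠ 0) (ht₁ : ∀ᶠ s in atTop, 1 < t s)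
    (ht : Tendsto (fun s => (t s + 1 / t s - (s + 2)) * gZ (m - 1) s ^ 2) atTop (𝓝 0)) :
    Tendsto (fun s => (t s - dominantRoot s) * relCoeff m (dominantRoot s)) atTop (𝓝 0) := by
  have hbound : Tendsto (fun s => 8 * |(t s + 1 / t s - (s + 2)) * gZ (m - 1) s ^ 2|)
      atTop (𝓝 0) := by
    simpa using ht.abs.const_mul 8
  refine squeeze_zero_norm' ?_ hbound
  filter_upwards [ht₁, eventually_ge_atTop 1] with s hts hs
  have hs₀ : 0 ≤ s := by linarith
  have hr : 2 ≤ dominantRoot s := by linarith [one_add_le_dominantRoot hs₀]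
  exact abs_sub_root_mul_relCoeff_le hr (dominantRoot_add_inv hs₀) hts hm

lemma tendsto_div_dominantRoot
    (h : Tendsto (fun s => (t s - dominantRoot s) * relCoeff m (dominantRoot s)) atTop (𝓝 0)) :
    Tendsto (fun s => t s / dominantRoot s) atTop (𝓝 1) := by
  rw [← tendsto_sub_nhds_zero_iff]
  refine squeeze_zero_norm' ?_ (by simpa only [norm_zero] using h.norm)
  filter_upwards [eventually_gt_atTop 0] with s hs
  have hr : 1 < dominantRoot s := by linarith [one_add_le_dominantRoot hs.le]
  have hr₀ : 0 < dominantRoot s := by linarith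
  have hc := inv_le_relCoeff hr m
  rw [div_sub_one hr₀.ne', div_eq_mul_inv, norm_mul, norm_mul]
  gcongr
  exact abs_le_abs_of_nonneg (by positivity) hc

end Limit

theorem B_limit_general (m : ℤ) (t : ℝ → ℝ) (ht₁ : ∀ᶠ s in atTop, 1 < t s)
    (ht : Tendsto (fun s => (t s + 1 / t s - (s + 2)) * gZ (m - 1) s ^ 2) atTop (𝓝 0)) :
    Tendsto (fun s =>
      (-fZ m s + t s * fZ (m - 1) s) / (-fZ (m - 1) s + t s * fZ m s) * t s ^ (2 * m))
      atTop (𝓝 1) := by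
  rcases eq_or_ne m 0 with rfl | hm
  · refine tendsto_const_nhds.congr' ?_
    filter_upwards [ht₁] with s hts
    have hf : fZ 0 s = 1 := by
      rw [← Nat.cast_zero, fZ_natCast, fN]
    have hne : -1 + t s ≠ 0 := by linarith
    rw [← fZ_neg, neg_zero, hf, mul_one, div_self hne, mul_zero, zpow_zero, one_mul]
  have hnum := tendsto_sub_dominantRoot_mul_relCoeff hm ht₁ ht
  have hden := tendsto_sub_dominantRoot_mul_relCoeff (neg_ne_zero.2 hm) ht₁ <| by
    simpa only [gZ_neg_sub_one, neg_sq] using ht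
  have hlim := ((hnum.const_add 1).div (hden.const_add 1) (by simp)).mul
    ((tendsto_div_dominantRoot hnum).zpow₀ (2 * m) (.inl one_ne_zero))
  simp only [add_zero, div_one, one_zpow, mul_one] at hlim
  refine hlim.congr' ?_
  filter_upwards [eventually_gt_atTop 0] with s hs
  have hr : 1 < dominantRoot s := by linarith [one_add_le_dominantRoot hs.le]
  exact (B_mul_zpow_eq hr (dominantRoot_add_inv hs.le) m (t s)).symm

/-- If `t(s) > 1` and `s + 2 < t(s) + 1/t(s) < s + 2 + 4/(s g_{m-1}(s)²)` for all `s > 0`,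
then for `B(s) = (-f_m(s) + t(s) f_{m-1}(s))/(-f_{m-1}(s) + t(s) f_m(s))` one has
`B(s)·t(s)^{2m} → 1` as `s → ∞`. -/
theorem B_limit (m : ℤ) (hm : m ≠ 0) (t : ℝ → ℝ)
    (ht : ∀ s : ℝ, 0 < s → 1 < t s ∧ s + 2 < t s + 1 / t s ∧
      t s + 1 / t s < s + 2 + 4 / (s * gZ (m - 1) s ^ 2)) :
    Tendsto (fun s =>
      (-fZ m s + t s * fZ (m - 1) s) / (-fZ (m - 1) s + t s * fZ m s) * t s ^ (2 * m))
      atTop (𝓝 1) := by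
  refine B_limit_general m t ?_ (tendsto_mul_sq_of_le_div zero_le_four ?_) <;>
    filter_upwards [eventually_gt_atTop 0] with s hs
  · exact (ht s hs).1
  · exact ⟨sub_nonneg.2 (ht s hs).2.1.le, sub_le_iff_le_add'.2 (ht s hs).2.2.le⟩
end
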